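/- Let φ be an even Schwartz function whose Fourier transform φ̂ is compactly supported. Then there is a constant C = C(φ) such that for every integer N ≥ 3, | (2/log N) · Σ_{p prime} (log p / p) · φ̂(2 log p / log N) − φ(0)/2 | ≤ C / log N. -/

import Mathlib

open MeasureTheory Real Complex

/-- The Fourier transform `φ̂(ξ) = ∫_ℝ φ(x) e^{-2πixξ} dx` of a real-valued function. -/
noncomputable def fourierHat (φ : ℝ → ℝ) (ξ : ℝ) : ℂ :=
  ∫ x : ℝ, (φ x : ℂ) * Complex.exp (-2 * π * Complex.I * x * ξ)


/-- `log p / p` at primes, zero elsewhere. -/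
noncomputable def mertA (k : ℕ) : ℝ := if k.Prime then Real.log k / k else 0

/-- `∑_{p ≤ n} log p / p`. -/
noncomputable def mertP (n : ℕ) : ℝ := ∑ k ∈ Finset.range (n + 1), mertA k

lemma log_factorial_eq (n : ℕ) : Real.log (n.factorial : ℝ) =
    ∑ p ∈ (Finset.range (n + 1)).filter Nat.Prime, (n.factorial.factorization p : ℝ) * Real.log p := by
  have h1 : (n.factorial : ℝ) = ∏ p ∈ (Finset.range (n + 1)).filter Nat.Prime,
      (p : ℝ) ^ (n.factorial.factorization p) := by
    conv_lhs => rw [← Nat.prod_factorization_pow_eq_self n.factorial_ne_zero]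
    rw [Finsupp.prod_of_support_subset (s := (Finset.range (n + 1)).filter Nat.Prime)]
    · push_cast; rfl
    · intro p hp
      have hp' := Nat.support_factorization n.factorial ▸ hp
      have hpp := Nat.prime_of_mem_primeFactors hp'
      have := (hpp.dvd_factorial).1 (Nat.dvd_of_mem_primeFactors hp')
      simp [hpp]; omega
    · simp
  rw [h1, Real.log_prod]
  · simp
  · intro p hp
    have := (Finset.mem_filter.1 hp).2.pos
    positivity

lemma mertP_upper (n : ℕ) (hn : 1 ≤ n) : mertP n ≤ Real.log n + Real.log 4 := by
  have hn0 : (0 : ℝ) < n := by exact_mod_cast hn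
  have h1 : Real.log (n.factorial : ℝ) ≤ n * Real.log n := by
    rw [← Real.log_pow]
    apply Real.log_le_log (by exact_mod_cast n.factorial_pos)
    exact_mod_cast Nat.factorial_le_pow n
  have h2 := Chebyshev.theta_le_log4_mul_x (x := n) hn0.le
  rw [Chebyshev.theta_eq_sum_primesLE_log] at h2
  have h3 : n * mertP n - ∑ p ∈ (Finset.range (n + 1)).filter Nat.Prime, Real.log p
      ≤ Real.log (n.factorial : ℝ) := by
    rw [log_factorial_eq, mertP]
    simp only [mertA]
    rw [← Finset.sum_filter, Finset.mul_sum, ← Finset.sum_sub_distrib]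
    apply Finset.sum_le_sum
    intro p hp
    have hpp := (Finset.mem_filter.1 hp).2
    have hpn := (Finset.mem_filter.1 hp).1
    have hp0 : (0 : ℝ) < p := by exact_mod_cast hpp.pos
    have hlog : 0 ≤ Real.log p := Real.log_natCast_nonneg p
    have hv : n / p ≤ n.factorial.factorization p := by
      rw [Nat.factorization_factorial hpp (b := Nat.log p n + 2) (by omega)]
      have := Finset.single_le_sum (f := fun i => n / p ^ i) (s := Finset.Ico 1 (Nat.log p n + 2))
        (fun i _ => Nat.zero_le _) (a := 1) (by simp)
      simpa using this
    have hv2 : (n : ℝ) / p - 1 ≤ n.factorial.factorization p := by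
      have h5 : (n : ℝ) / p < (n / p : ℕ) + 1 := by
        rw [div_lt_iff₀ hp0]
        have := Nat.lt_div_mul_add (a := n) hpp.pos
        have h6 : n < (n / p + 1) * p := by linarith
        exact_mod_cast h6
      have : ((n / p : ℕ) : ℝ) ≤ n.factorial.factorization p := by exact_mod_cast hv
      linarith
    calc (n : ℝ) * (Real.log p / p) - Real.log p = (n / p - 1) * Real.log p := by ring
      _ ≤ _ := by gcongr
  have h4 : ∑ p ∈ (Finset.range (n + 1)).filter Nat.Prime, Real.log p ≤ Real.log 4 * n := by
    convert h2 using 2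
    ext p
    simp [Nat.mem_primesLE]
  have : n * mertP n ≤ n * (Real.log n + Real.log 4) := by nlinarith
  exact le_of_mul_le_mul_left this hn0

lemma mertP_lower : ∃ C : ℝ, ∀ n : ℕ, 1 ≤ n → Real.log n - C ≤ mertP n := by
  have hs : Summable (fun n : ℕ => 4 * (1 / (n : ℝ) ^ (3 / 2 : ℝ))) :=
    (Real.summable_one_div_nat_rpow.2 (by norm_num)).mul_left 4
  refine ⟨1 + ∑' n : ℕ, 4 * (1 / (n : ℝ) ^ (3 / 2 : ℝ)), fun n hn => ?_⟩
  have hn0 : (0 : ℝ) < n := by exact_mod_cast hn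
  have h1 : n * Real.log n - n ≤ Real.log (n.factorial : ℝ) := by
    have := Real.pow_div_factorial_le_exp (n : ℝ) hn0.le n
    have hf : (0 : ℝ) < n.factorial := by exact_mod_cast n.factorial_pos
    have h := Real.log_le_log (by positivity) this
    rw [Real.log_div (by positivity) hf.ne', Real.log_pow, Real.log_exp] at h
    linarith
  have h2 : Real.log (n.factorial : ℝ) ≤ n * (mertP n +
      ∑ p ∈ (Finset.range (n + 1)).filter Nat.Prime, 4 * (1 / (p : ℝ) ^ (3 / 2 : ℝ))) := by
    rw [log_factorial_eq, mertP]
    simp only [mertA]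
    rw [← Finset.sum_filter, ← Finset.sum_add_distrib, Finset.mul_sum]
    apply Finset.sum_le_sum
    intro p hp
    have hpp := (Finset.mem_filter.1 hp).2
    have hp2 : (2 : ℝ) ≤ p := by exact_mod_cast hpp.two_le
    have hp0 : (0 : ℝ) < p := by linarith
    have hlog : 0 ≤ Real.log p := Real.log_natCast_nonneg p
    have hv : ((p : ℝ) - 1) * n.factorial.factorization p ≤ n := by
      have h5 : (p - 1) * n.factorial.factorization p ≤ n := by
        rw [Nat.sub_one_mul_factorization_factorial hpp]; omega
      have h6 : (((p - 1) * n.factorial.factorization p : ℕ) : ℝ) ≤ n := by exact_mod_cast h5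
      rwa [Nat.cast_mul, Nat.cast_sub hpp.one_le, Nat.cast_one] at h6
    have hv2 : (n.factorial.factorization p : ℝ) ≤ n / (p - 1) := by
      rw [le_div_iff₀ (by linarith)]; linarith
    have hl : Real.log p ≤ 2 * (p : ℝ) ^ (1 / 2 : ℝ) := by
      have := Real.log_le_rpow_div hp0.le (ε := 1 / 2) (by norm_num)
      linarith
    have hpw : (p : ℝ) ^ (3 / 2 : ℝ) * (p : ℝ) ^ (1 / 2 : ℝ) = p ^ 2 := by
      rw [← Real.rpow_add hp0, ← Real.rpow_natCast]; norm_num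
    have hpos : 0 < (p : ℝ) ^ (3 / 2 : ℝ) := by positivity
    have key : Real.log p / (p - 1) ≤ Real.log p / p + 4 * (1 / (p : ℝ) ^ (3 / 2 : ℝ)) := by
      have e : Real.log p / (p - 1) = Real.log p / p + Real.log p / (p * (p - 1)) := by
        have : (p : ℝ) - 1 ≠ 0 := by linarith
        field_simp; ring
      rw [e]
      gcongr
      rw [mul_one_div, div_le_div_iff₀ (by nlinarith) hpos]
      calc Real.log p * (p : ℝ) ^ (3 / 2 : ℝ) ≤ 2 * (p : ℝ) ^ (1 / 2 : ℝ) * (p : ℝ) ^ (3 / 2 : ℝ) := by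
            gcongr
        _ = 2 * p ^ 2 := by rw [← hpw]; ring
        _ ≤ _ := by nlinarith
    calc (n.factorial.factorization p : ℝ) * Real.log p ≤ n / (p - 1) * Real.log p := by gcongr
      _ = n * (Real.log p / (p - 1)) := by ring
      _ ≤ _ := by gcongr
  have h3 : ∑ p ∈ (Finset.range (n + 1)).filter Nat.Prime, 4 * (1 / (p : ℝ) ^ (3 / 2 : ℝ)) ≤
      ∑' n : ℕ, 4 * (1 / (n : ℝ) ^ (3 / 2 : ℝ)) :=
    hs.sum_le_tsum _ (fun i _ => by positivity)
  have : n * (Real.log n - 1) ≤ n * (mertP n +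
      ∑ p ∈ (Finset.range (n + 1)).filter Nat.Prime, 4 * (1 / (p : ℝ) ^ (3 / 2 : ℝ))) := by linarith
  have := le_of_mul_le_mul_left this hn0
  linarith

lemma mertens : ∃ C : ℝ, ∀ v : ℝ, 0 ≤ v → |mertP ⌊Real.exp v⌋₊ - v| ≤ C := by
  obtain ⟨C, hC⟩ := mertP_lower
  refine ⟨|C| + Real.log 2 + Real.log 4, fun v hv => ?_⟩
  have he : 1 ≤ Real.exp v := Real.one_le_exp hv
  have hn : 1 ≤ ⌊Real.exp v⌋₊ := Nat.le_floor (by simpa using he)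
  have hn0 : (1 : ℝ) ≤ ⌊Real.exp v⌋₊ := by exact_mod_cast hn
  have h1 := hC _ hn
  have h2 := mertP_upper _ hn
  have h3 : Real.log ⌊Real.exp v⌋₊ ≤ v := by
    rw [Real.log_le_iff_le_exp (by linarith)]
    exact Nat.floor_le (by positivity)
  have h4 : v ≤ Real.log ⌊Real.exp v⌋₊ + Real.log 2 := by
    rw [← Real.log_mul (by linarith) (by norm_num), Real.le_log_iff_exp_le (by linarith)]
    have := Nat.lt_floor_add_one (Real.exp v)
    linarith
  have := le_abs_self C
  have := abs_nonneg C
  have := Real.log_nonneg (x := 2) (by norm_num)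
  have := Real.log_nonneg (x := 4) (by norm_num)
  rw [abs_le]; constructor <;> linarith

open FourierTransform in
lemma hat_facts (φ : SchwartzMap ℝ ℝ) (heven : ∀ x : ℝ, φ (-x) = φ x) :
    ContDiff ℝ 1 (fourierHat (fun x => φ x)) ∧ Integrable (fourierHat (fun x => φ x)) ∧
    ∫ u in Set.Ioi (0 : ℝ), fourierHat (fun x => φ x) u = (φ 0 : ℂ) / 2 := by
  let ψ : SchwartzMap ℝ ℂ := SchwartzMap.postcompCLM (𝕜 := ℝ) Complex.ofRealCLM φ
  have hψ : ∀ x, ψ x = (φ x : ℂ) := fun x => rfl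
  have hg : fourierHat (fun x => φ x) = ⇑(𝓕 ψ : SchwartzMap ℝ ℂ) := by
    ext ξ
    rw [SchwartzMap.fourier_coe, Real.fourier_real_eq_integral_exp_smul, fourierHat]
    congr 1; ext x
    rw [hψ, smul_eq_mul, mul_comm]
    congr 2; push_cast; ring
  have heg : ∀ u, fourierHat (fun x => φ x) (-u) = fourierHat (fun x => φ x) u := by
    intro u
    rw [fourierHat, fourierHat, ← integral_neg_eq_self]
    congr 1; ext x
    simp only [heven]
    congr 2; push_cast; ring
  have hint : Integrable (fourierHat (fun x => φ x)) := by rw [hg]; exact (𝓕 ψ : SchwartzMap ℝ ℂ).integrable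
  refine ⟨by rw [hg]; exact (𝓕 ψ : SchwartzMap ℝ ℂ).smooth 1, hint, ?_⟩
  have htot : ∫ u, fourierHat (fun x => φ x) u = (φ 0 : ℂ) := by
    have h1 : (𝓕⁻ (𝓕 ψ)) 0 = ψ 0 := by rw [fourierInv_fourier_eq]
    rw [SchwartzMap.fourierInv_coe, Real.fourierInv_eq'] at h1
    rw [hg, ← hψ, ← h1]
    simp
  have h2 : ∫ u in Set.Iic (0 : ℝ), fourierHat (fun x => φ x) u =
      ∫ u in Set.Ioi (0 : ℝ), fourierHat (fun x => φ x) u := by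
    have := integral_comp_neg_Iic 0 (fourierHat (fun x => φ x))
    simpa only [heg, neg_zero] using this
  have h3 := intervalIntegral.integral_Iic_add_Ioi (b := (0 : ℝ)) hint.integrableOn hint.integrableOn
  rw [htot, h2] at h3
  rw [← h3]; ring

lemma main_identity (g : ℝ → ℂ) (hg : ContDiff ℝ 1 g) (hsupp : HasCompactSupport g) :
    ∃ C : ℝ, ∀ L : ℝ, 0 < L →
      ‖(∑' p : Nat.Primes, ((Real.log p / (p : ℝ) : ℝ) : ℂ) * g (2 * Real.log p / L))
        - (L / 2 : ℝ) * ∫ u in Set.Ioi (0 : ℝ), g u‖ ≤ C := by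
  obtain ⟨C, hC⟩ := mertens
  have hcd : Continuous (deriv g) := hg.continuous_deriv le_rfl
  have hdi : Integrable (deriv g) := hcd.integrable_of_hasCompactSupport hsupp.deriv
  have hgi : Integrable g := hg.continuous.integrable_of_hasCompactSupport hsupp
  have hudc : Continuous (fun u : ℝ => (u : ℂ) * deriv g u) := by fun_prop
  have hudi : Integrable (fun u : ℝ => (u : ℂ) * deriv g u) :=
    hudc.integrable_of_hasCompactSupport (hsupp.deriv.mul_left)
  have hparts : ∫ u in Set.Ioi (0 : ℝ), g u = - ∫ u in Set.Ioi (0 : ℝ), (u : ℂ) * deriv g u := by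
    have h1 : ContDiff ℝ 1 (fun u : ℝ => (u : ℂ) * g u) := Complex.ofRealCLM.contDiff.mul hg
    have h2 := HasCompactSupport.integral_Ioi_deriv_eq h1 (hsupp.mul_left) 0
    have h3 : ∀ u : ℝ, deriv (fun u : ℝ => (u : ℂ) * g u) u = g u + (u : ℂ) * deriv g u := by
      intro u
      have := (Complex.ofRealCLM.hasDerivAt (x := u)).mul
        ((hg.differentiable one_ne_zero u).hasDerivAt)
      have h4 : deriv (fun u : ℝ => (u : ℂ) * g u) u = _ := this.deriv
      simpa using h4
    simp only [h3] at h2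
    rw [integral_add hgi.integrableOn hudi.integrableOn] at h2
    simp only [Complex.ofReal_zero, zero_mul, neg_zero] at h2
    exact eq_neg_of_add_eq_zero_left h2
  obtain ⟨R, hR⟩ : ∃ R : ℝ, ∀ u : ℝ, R < u → g u = 0 ∧ deriv g u = 0 := by
    obtain ⟨R, hR⟩ := hsupp.isCompact.bddAbove
    have h0 : ∀ u : ℝ, R < u → u ∉ tsupport g := fun u hu hm => absurd (hR hm) (not_le.2 hu)
    exact ⟨R, fun u hu => ⟨image_eq_zero_of_notMem_tsupport (h0 u hu),
      by
        by_contra h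
        exact h0 u hu (support_deriv_subset h)⟩⟩
  refine ⟨C * ∫ u in Set.Ioi (0 : ℝ), ‖deriv g u‖, fun L hL => ?_⟩
  set K : ℕ := ⌊Real.exp (R * L / 2)⌋₊ with hK
  have hsum : (∑' p : Nat.Primes, ((Real.log p / (p : ℝ) : ℝ) : ℂ) * g (2 * Real.log p / L)) =
      ∑ k ∈ Finset.range (K + 1), (mertA k : ℂ) * g (2 * Real.log k / L) := by
    have h1 : (∑' p : Nat.Primes, ((Real.log p / (p : ℝ) : ℝ) : ℂ) * g (2 * Real.log p / L)) =
        ∑' k : ℕ, (mertA k : ℂ) * g (2 * Real.log k / L) := by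
      have := tsum_subtype {p : ℕ | p.Prime}
        (fun k : ℕ => ((Real.log k / (k : ℝ) : ℝ) : ℂ) * g (2 * Real.log k / L))
      refine Eq.trans this ?_
      congr 1; ext k
      by_cases hk : k.Prime <;> simp [Set.indicator, mertA, hk]
    rw [h1]
    apply tsum_eq_sum
    intro k hk
    by_cases hkp : k.Prime
    · have hk0 : (0 : ℝ) < k := by exact_mod_cast hkp.pos
      have h2 : K < k := by simpa [Nat.lt_succ_iff] using hk
      have h3 : Real.exp (R * L / 2) < k := (Nat.floor_lt (by positivity)).1 h2
      rw [← Real.lt_log_iff_exp_lt hk0] at h3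
      rw [(hR _ _).1, mul_zero]
      rw [lt_div_iff₀ hL]; linarith
    · simp [mertA, hkp]
  let F : ℝ → ℂ := fun u => ∑ k ∈ Finset.range (K + 1),
    (mertA k : ℂ) * (Set.Ici (2 * Real.log k / L)).indicator (deriv g) u
  have hFi : Integrable F := by
    apply integrable_finsetSum
    intro k _
    exact (hdi.indicator measurableSet_Ici).const_mul _
  have hF : ∑ k ∈ Finset.range (K + 1), (mertA k : ℂ) * g (2 * Real.log k / L) =
      - ∫ u in Set.Ioi (0 : ℝ), F u := by
    rw [integral_finsetSum]
    · rw [← Finset.sum_neg_distrib]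
      refine Finset.sum_congr rfl fun k _ => ?_
      by_cases hkp : k.Prime
      · have hpos : 0 < 2 * Real.log k / L := by
          have := Real.log_pos (x := k) (by exact_mod_cast hkp.one_lt)
          positivity
        rw [integral_const_mul, setIntegral_indicator measurableSet_Ici,
          Set.inter_eq_right.2 (Set.Ici_subset_Ioi.2 hpos), integral_Ici_eq_integral_Ioi,
          HasCompactSupport.integral_Ioi_deriv_eq hg hsupp]
        ring
      · simp [mertA, hkp]
    · intro k _
      exact ((hdi.indicator measurableSet_Ici).const_mul _).integrableOn
  have hbd : ∀ u ∈ Set.Ioi (0 : ℝ),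
      ‖F u - (L / 2 : ℝ) * ((u : ℂ) * deriv g u)‖ ≤ C * ‖deriv g u‖ := by
    intro u hu
    have hu0 : 0 < u := hu
    by_cases huR : R < u
    · have hz := (hR u huR).2
      have : F u = 0 := by
        refine Finset.sum_eq_zero fun k _ => ?_
        simp [Set.indicator, hz]
      simp [this, hz]
    · have huR' : u ≤ R := not_lt.1 huR
      have hFu : F u = (mertP ⌊Real.exp (u * L / 2)⌋₊ : ℂ) * deriv g u := by
        have hle : ⌊Real.exp (u * L / 2)⌋₊ ≤ K := by
          apply Nat.floor_le_floor
          gcongr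
        rw [mertP, Complex.ofReal_sum, Finset.sum_mul]
        change ∑ k ∈ Finset.range (K + 1), (mertA k : ℂ) *
            (Set.Ici (2 * Real.log k / L)).indicator (deriv g) u = _
        rw [← Finset.sum_subset (s₁ := Finset.range (⌊Real.exp (u * L / 2)⌋₊ + 1))
          (s₂ := Finset.range (K + 1))
          (f := fun k : ℕ => (mertA k : ℂ) *
            (Set.Ici (2 * Real.log k / L)).indicator (deriv g) u)]
        · refine Finset.sum_congr rfl fun k hk => ?_
          by_cases hkp : k.Prime
          · have hk0 : (0 : ℝ) < k := by exact_mod_cast hkp.pos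
            have h2 : k ≤ ⌊Real.exp (u * L / 2)⌋₊ := Nat.lt_succ_iff.1 (Finset.mem_range.1 hk)
            have h3 : (k : ℝ) ≤ Real.exp (u * L / 2) := (Nat.le_floor_iff (by positivity)).1 h2
            rw [← Real.log_le_iff_le_exp hk0] at h3
            rw [Set.indicator_of_mem]
            rw [Set.mem_Ici, div_le_iff₀ hL]; linarith
          · simp [mertA, hkp]
        · intro k hk
          rw [Finset.mem_range] at hk ⊢
          omega
        · intro k _ hk
          by_cases hkp : k.Prime
          · have hk0 : (0 : ℝ) < k := by exact_mod_cast hkp.pos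
            have h2 : ⌊Real.exp (u * L / 2)⌋₊ < k := by
              rw [Finset.mem_range] at hk; omega
            have h3 : Real.exp (u * L / 2) < k := (Nat.floor_lt (by positivity)).1 h2
            rw [← Real.lt_log_iff_exp_lt hk0] at h3
            rw [Set.indicator_of_notMem, mul_zero]
            rw [Set.mem_Ici, not_le, lt_div_iff₀ hL]; linarith
          · simp [mertA, hkp]
      have e : F u - (L / 2 : ℝ) * ((u : ℂ) * deriv g u) =
          ((mertP ⌊Real.exp (u * L / 2)⌋₊ - u * L / 2 : ℝ) : ℂ) * deriv g u := by
        rw [hFu]; push_cast; ring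
      rw [e, norm_mul, Complex.norm_real, Real.norm_eq_abs]
      gcongr
      exact hC _ (by positivity)
  have hfin : (∑ k ∈ Finset.range (K + 1), (mertA k : ℂ) * g (2 * Real.log k / L))
        - (L / 2 : ℝ) * ∫ u in Set.Ioi (0 : ℝ), g u =
      - ∫ u in Set.Ioi (0 : ℝ), (F u - (L / 2 : ℝ) * ((u : ℂ) * deriv g u)) := by
    rw [integral_sub hFi.integrableOn (hudi.const_mul _).integrableOn, integral_const_mul,
      hF, hparts]
    ring
  rw [hsum, hfin, norm_neg, ← integral_const_mul]
  apply norm_integral_le_of_norm_le ((hdi.norm.const_mul C).integrableOn)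
  exact (ae_restrict_iff' measurableSet_Ioi).2 (Filter.Eventually.of_forall hbd)



/-- Prime number theorem consequence: for an even Schwartz function `φ` with compactly
supported Fourier transform, `(2/log N) Σ_p (log p / p) φ̂(2 log p / log N) = φ(0)/2 + O(1/log N)`. -/
theorem prime_sum_asymptotic (φ : SchwartzMap ℝ ℝ) (heven : ∀ x : ℝ, φ (-x) = φ x)
    (hsupp : HasCompactSupport (fourierHat (fun x => φ x))) :
    ∃ C : ℝ, ∀ N : ℕ, 3 ≤ N →
      ‖(2 / (Real.log N : ℂ)) * (∑' p : Nat.Primes,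
            ((Real.log p / (p : ℝ) : ℝ) : ℂ) *
              fourierHat (fun x => φ x) (2 * Real.log p / Real.log N)) - (φ 0 : ℂ) / 2‖
        ≤ C / Real.log N := by
  obtain ⟨h1, -, h3⟩ := hat_facts φ heven
  obtain ⟨C, hC⟩ := main_identity _ h1 hsupp
  refine ⟨2 * C, fun N hN => ?_⟩
  have hL : 0 < Real.log N := Real.log_pos (by exact_mod_cast (by omega : 1 < N))
  have h := hC _ hL
  rw [h3] at h
  have hL' : (Real.log N : ℂ) ≠ 0 := by exact_mod_cast hL.ne'
  have e : ∀ S : ℂ, (2 / (Real.log N : ℂ)) * S - (φ 0 : ℂ) / 2 =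
      ((2 / Real.log N : ℝ) : ℂ) * (S - (Real.log N / 2 : ℝ) * ((φ 0 : ℂ) / 2)) := by
    intro S
    rw [Complex.ofReal_div, Complex.ofReal_div]
    simp only [Complex.ofReal_ofNat]
    field_simp
  rw [e, norm_mul, Complex.norm_real, Real.norm_eq_abs, abs_of_pos (by positivity)]
  calc _ ≤ 2 / Real.log N * C := by gcongr
    _ = _ := by ring
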